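/- arXiv:1902.09309 — 2 statements merged into one kernel-verified Lean document; each statement's English description precedes it below -/
import Mathlib

section
/- For all positive integers n and k, the Bernoulli–Stirling number of the second kind B_{n,k} is an integer, i.e. the rational number B_{n,k} lies in ℤ. -/
/-!
The argument is local: it suffices that no prime `p` divides the denominator of `bsB n k`.

Von Staudt–Clausen gives that `p * B_h` is always `p`-integral, and that `B_h` itself is `p`-integral
unless `p - 1 ∣ h`.

* If `p ∣ k`, every term of the defining sum is `p`-integral, since `B_h * k ^ h` is
  (`bernoulli_mul_pow_mem`).
* If `p ∤ k`, then `B_h * (k ^ h - 1)` is `p`-integral by Fermat's little theorem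
  (`bernoulli_mul_pow_sub_one_mem`), so `bsB n k` is congruent modulo `p`-integers to the sum
  `∑ B_h * C(n, h) * S(n - h, k)`. The exponential generating function of the latter is
  `t / (e ^ t - 1) * (e ^ t - 1) ^ k / k!`, so that the sum equals `n * S(n - 1, k - 1) / k`
  (`sum_bernoulli_mul_stirling2`), which is `p`-integral because `k` is a `p`-adic unit.
-/

/-- Stirling numbers of the second kind (partition Stirling numbers). -/
def stirling2 : ℕ → ℕ → ℕ
  | 0, 0 => 1
  | 0, _ + 1 => 0
  | _ + 1, 0 => 0
  | n + 1, k + 1 => (k + 1) * stirling2 n (k + 1) + stirling2 n k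

/-- Bernoulli–Stirling numbers of the second kind. -/
def bsB (n k : ℕ) : ℚ :=
  ∑ h ∈ Finset.range (n + 1),
    bernoulli h * (n.choose h) * stirling2 (n - h) k * (k : ℚ) ^ h

open PowerSeries in
/-- A formal solution of `f' = c f` vanishing at the origin is zero. -/
lemma eq_zero_of_derivative_eq (c : ℚ) (f : ℚ⟦X⟧) (h0 : constantCoeff f = 0)
    (hf : d⁄dX ℚ f = C c * f) : f = 0 := by
  ext n
  induction n with
  | zero => simpa using h0
  | succ n ih =>
    have h := congrArg (coeff n) hf
    rw [coeff_derivative, coeff_C_mul, ih] at h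
    have hn : (n : ℚ) + 1 ≠ 0 := by positivity
    simpa [hn] using h

/-- The exponential generating function of the Stirling numbers `S(·, k)`. -/
noncomputable def stirlingEGF (k : ℕ) : PowerSeries ℚ :=
  PowerSeries.mk fun n => (stirling2 n k : ℚ) / n.factorial

lemma stirlingEGF_zero : stirlingEGF 0 = 1 := by
  ext n
  cases n <;> simp [stirlingEGF, stirling2, PowerSeries.coeff_one]

open PowerSeries in
lemma derivative_stirlingEGF_succ (k : ℕ) :
    d⁄dX ℚ (stirlingEGF (k + 1)) = C ((k : ℚ) + 1) * stirlingEGF (k + 1) + stirlingEGF k := by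
  ext n
  rw [coeff_derivative, map_add, coeff_C_mul]
  simp only [stirlingEGF, coeff_mk, stirling2, Nat.factorial_succ]
  have hn : (n : ℚ) + 1 ≠ 0 := by positivity
  have hf : (n.factorial : ℚ) ≠ 0 := by positivity
  push_cast
  field_simp

open PowerSeries in
/-- By induction on `k`, the difference `D` of the two sides satisfies `D' = (k + 1) D`, and it has
no constant term. -/
lemma stirlingEGF_succ (k : ℕ) :
    C ((k : ℚ) + 1) * stirlingEGF (k + 1) = (exp ℚ - 1) * stirlingEGF k := by
  have hc : ∀ k : ℕ, constantCoeff (C ((k : ℚ) + 1) * stirlingEGF (k + 1)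
      - (exp ℚ - 1) * stirlingEGF k) = 0 := fun k => by
    have h0 : constantCoeff (stirlingEGF (k + 1)) = 0 := by
      rw [← coeff_zero_eq_constantCoeff_apply]
      simp [stirlingEGF, stirling2]
    simp [h0]
  have hC : ∀ m : ℕ, d⁄dX ℚ (C ((m : ℚ) + 1) * stirlingEGF (m + 1))
      = C ((m : ℚ) + 1) * (C ((m : ℚ) + 1) * stirlingEGF (m + 1) + stirlingEGF m) := fun m => by
    rw [Derivation.leibniz, derivative_stirlingEGF_succ, derivative_C]
    simp
  induction k with
  | zero =>
    refine sub_eq_zero.mp (eq_zero_of_derivative_eq 1 _ (hc 0) ?_)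
    rw [map_sub, hC, stirlingEGF_zero]
    simp [derivative_exp]
    ring
  | succ k ih =>
    refine sub_eq_zero.mp (eq_zero_of_derivative_eq (((k + 1 : ℕ) : ℚ) + 1) _ (hc (k + 1)) ?_)
    rw [map_sub, hC, Derivation.leibniz, derivative_stirlingEGF_succ, map_sub, derivative_exp,
      derivative_one]
    simp only [smul_eq_mul, Nat.cast_add, Nat.cast_one, map_add, map_one] at ih ⊢
    linear_combination ih

open PowerSeries in
/-- Multiplying `(k + 1) S_{k+1}(t) = (e ^ t - 1) S_k(t)` by `t / (e ^ t - 1)` gives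
`(k + 1) * (t / (e ^ t - 1)) * S_{k+1}(t) = t * S_k(t)`, where `S_k` is the exponential generating
function of `S(·, k)`; the identity compares the coefficients of `t ^ (n + 1)`. -/
lemma sum_bernoulli_mul_stirling2 (n k : ℕ) :
    ((k : ℚ) + 1) * ∑ h ∈ Finset.range (n + 1 + 1),
      bernoulli h * ((n + 1).choose h) * stirling2 (n + 1 - h) (k + 1)
    = (n + 1) * stirling2 n k := by
  have key : C ((k : ℚ) + 1) * (bernoulliPowerSeries ℚ * stirlingEGF (k + 1))
      = X * stirlingEGF k := by
    rw [← bernoulliPowerSeries_mul_exp_sub_one, mul_left_comm, stirlingEGF_succ, mul_assoc]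
  have h := congrArg (coeff (n + 1)) key
  rw [coeff_C_mul, coeff_succ_X_mul, coeff_mul,
    Finset.Nat.sum_antidiagonal_eq_sum_range_succ_mk] at h
  simp only [stirlingEGF, bernoulliPowerSeries, coeff_mk, Algebra.algebraMap_self,
    RingHom.id_apply] at h
  have hn : (n.factorial : ℚ) ≠ 0 := by positivity
  have hs : ((n + 1).factorial : ℚ) = (n + 1) * n.factorial := by
    rw [Nat.factorial_succ]; push_cast; ring
  have hsum : ∑ h ∈ Finset.range (n + 1 + 1),
      bernoulli h * ((n + 1).choose h) * stirling2 (n + 1 - h) (k + 1)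
      = (n + 1).factorial * ∑ h ∈ Finset.range (n + 1 + 1),
        bernoulli h / h.factorial * (stirling2 (n + 1 - h) (k + 1) / (n + 1 - h).factorial) := by
    rw [Finset.mul_sum]
    refine Finset.sum_congr rfl fun i hi => ?_
    rw [Nat.cast_choose ℚ (Nat.lt_succ_iff.mp (Finset.mem_range.mp hi))]
    ring
  rw [Nat.succ_eq_add_one] at h
  rw [hsum, mul_left_comm, h, hs]
  field_simp

/-- The ring of `p`-integral rationals, i.e. `ℤ` localized at `(p)`. -/
noncomputable abbrev pInt (p : ℕ) [Fact p.Prime] : Subring ℚ :=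
  (Rat.padicValuation p).integer

lemma mem_pInt {p : ℕ} [Fact p.Prime] {x : ℚ} : x ∈ pInt p ↔ ¬ p ∣ x.den :=
  Rat.padicValuation_le_one_iff

lemma inv_mem_pInt {p q : ℕ} [Fact p.Prime] (hq : ¬ p ∣ q) : (1 : ℚ) / q ∈ pInt p := by
  have h0 : q ≠ 0 := fun h => hq (h ▸ dvd_zero p)
  rw [mem_pInt, show ((1 : ℚ) / q).den = q by simp [h0]]
  exact hq

/-- Local form of the von Staudt–Clausen theorem. -/
lemma bernoulli_local (p : ℕ) [hp : Fact p.Prime] (h : ℕ) :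
    (p : ℚ) * bernoulli h ∈ pInt p ∧ (¬ (p - 1) ∣ h → bernoulli h ∈ pInt p) := by
  rcases Nat.even_or_odd' h with ⟨m, rfl | rfl⟩
  · obtain ⟨z, hz⟩ := Bernoulli.vonStaudt_clausen m
    have hB := eq_sub_of_add_eq hz.symm
    have hne : ∀ q : ℕ, q.Prime → q ≠ p → (1 : ℚ) / q ∈ pInt p := fun q hq hqp =>
      inv_mem_pInt fun hd => hqp ((Nat.prime_dvd_prime_iff_eq hp.out hq).mp hd).symm
    rw [hB]
    constructor
    · rw [mul_sub, Finset.mul_sum]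
      refine sub_mem (mul_mem (natCast_mem _ _) (intCast_mem _ _)) (sum_mem fun q hq => ?_)
      by_cases hqp : q = p
      · subst hqp
        rw [mul_one_div_cancel (by exact_mod_cast hp.out.ne_zero)]
        exact one_mem _
      · exact mul_mem (natCast_mem _ _) (hne q (Finset.mem_filter.mp hq).2.1 hqp)
    · intro hd
      refine sub_mem (intCast_mem _ _) (sum_mem fun q hq => ?_)
      obtain ⟨-, hq, hqd⟩ := Finset.mem_filter.mp hq
      exact hne q hq fun hqp => hd (hqp ▸ hqd)
  · rcases Nat.eq_zero_or_pos m with rfl | hm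
    · rw [mul_zero, zero_add, bernoulli_one]
      by_cases h2 : p = 2
      · subst h2
        refine ⟨?_, by simp⟩
        have h1 : ((2 : ℕ) : ℚ) * (-1 / 2) = -1 := by norm_num
        rw [h1]
        exact neg_mem (one_mem _)
      · have hmem : (-1 / 2 : ℚ) ∈ pInt p := by
          rw [show (-1 / 2 : ℚ) = -(1 / (2 : ℕ)) by norm_num]
          exact neg_mem (inv_mem_pInt fun hd =>
            h2 ((Nat.prime_dvd_prime_iff_eq hp.out Nat.prime_two).mp hd))
        exact ⟨mul_mem (natCast_mem _ _) hmem, fun _ => hmem⟩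
    · rw [bernoulli_eq_zero_of_odd ⟨m, rfl⟩ (by omega), mul_zero]
      exact ⟨zero_mem _, fun _ => zero_mem _⟩

lemma bernoulli_mul_pow_mem {p : ℕ} [Fact p.Prime] {k : ℕ} (hk : p ∣ k) (h : ℕ) :
    bernoulli h * (k : ℚ) ^ h ∈ pInt p := by
  rcases h with _ | h
  · simp
  · obtain ⟨c, rfl⟩ := hk
    rw [show bernoulli (h + 1) * ((p * c : ℕ) : ℚ) ^ (h + 1)
      = ((c * (p * c) ^ h : ℕ) : ℚ) * (p * bernoulli (h + 1)) by push_cast; ring]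
    exact mul_mem (natCast_mem _ _) (bernoulli_local p _).1

lemma bernoulli_mul_pow_sub_one_mem {p : ℕ} [hp : Fact p.Prime] {k : ℕ} (hk : ¬ p ∣ k) (h : ℕ) :
    bernoulli h * ((k : ℚ) ^ h - 1) ∈ pInt p := by
  by_cases hd : (p - 1) ∣ h
  · obtain ⟨m, rfl⟩ := hd
    have hcop : IsCoprime (k : ℤ) p :=
      Nat.isCoprime_iff_coprime.mpr ((Nat.Prime.coprime_iff_not_dvd hp.out).mpr hk).symm
    have h1 : (k : ℤ) ^ ((p - 1) * m) ≡ 1 [ZMOD p] := by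
      rw [pow_mul]
      simpa using (Int.ModEq.pow_card_sub_one_eq_one hp.out hcop).pow m
    obtain ⟨c, hc⟩ := h1.symm.dvd
    have hc' : (k : ℚ) ^ ((p - 1) * m) - 1 = p * c := by exact_mod_cast hc
    rw [hc', show ∀ b : ℚ, b * (p * c) = c * (p * b) from fun b => by ring]
    exact mul_mem (intCast_mem _ _) (bernoulli_local p _).1
  · exact mul_mem ((bernoulli_local p h).2 hd)
      (sub_mem (pow_mem (natCast_mem _ _) _) (one_mem _))

lemma bsB_mem_pInt (p : ℕ) [Fact p.Prime] (n k : ℕ) :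
    bsB (n + 1) (k + 1) ∈ pInt p := by
  by_cases hk : p ∣ k + 1
  · refine sum_mem fun h _ => ?_
    rw [show ∀ a b c d : ℚ, a * b * c * d = a * d * b * c from fun a b c d => by ring]
    exact mul_mem (mul_mem (bernoulli_mul_pow_mem hk h) (natCast_mem _ _)) (natCast_mem _ _)
  · have hS := sum_bernoulli_mul_stirling2 n k
    set S := ∑ h ∈ Finset.range (n + 1 + 1),
      bernoulli h * ((n + 1).choose h) * stirling2 (n + 1 - h) (k + 1) with hSdef
    have hSmem : S ∈ pInt p := by
      have hk0 : (k : ℚ) + 1 ≠ 0 := by positivity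
      have : S = 1 / ((k + 1 : ℕ) : ℚ) * (((n + 1) * stirling2 n k : ℕ) : ℚ) := by
        push_cast
        rw [← hS]
        field_simp
      rw [this]
      exact mul_mem (inv_mem_pInt hk) (natCast_mem _ _)
    have hdiff : bsB (n + 1) (k + 1) - S ∈ pInt p := by
      rw [bsB, hSdef, ← Finset.sum_sub_distrib]
      refine sum_mem fun h _ => ?_
      rw [show ∀ a b c d : ℚ, a * b * c * d - a * b * c = a * (d - 1) * b * c
        from fun a b c d => by ring]
      exact mul_mem (mul_mem (bernoulli_mul_pow_sub_one_mem hk h) (natCast_mem _ _))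
        (natCast_mem _ _)
    simpa using add_mem hdiff hSmem

theorem bsB_isInt (n k : ℕ) (hn : 0 < n) (hk : 0 < k) : ∃ z : ℤ, bsB n k = (z : ℚ) := by
  obtain ⟨n, rfl⟩ := Nat.exists_eq_succ_of_ne_zero hn.ne'
  obtain ⟨k, rfl⟩ := Nat.exists_eq_succ_of_ne_zero hk.ne'
  refine ⟨_, (Rat.coe_int_num_of_den_eq_one ?_).symm⟩
  by_contra h
  obtain ⟨p, hp, hdvd⟩ := Nat.ne_one_iff_exists_prime_dvd.mp h
  have : Fact p.Prime := ⟨hp⟩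
  exact mem_pInt.mp (bsB_mem_pInt p n k) hdvd
end

section
/- For all nonnegative integers n and x with x ≥ n, one has A_{x,x-n} = Σ_{u=0}^{n} C(n+x, n-u) · C(n-x, n+u) · B_{n+u,u}, where C(a, b) for an integer a (possibly negative) and a nonnegative integer b denotes the generalized binomial coefficient a(a-1)⋯(a-b+1)/b!. -/
/-!
The Bernoulli numbers play no special role: the identity is Lagrange interpolation.

Let `g m` be the coefficient of `t ^ m` in `((e ^ t - 1) / t) ^ z`. It is a polynomial in `z` of
degree at most `m`, and it interpolates both kinds of Stirling numbers:
`{m + j, j} = (m + j)! / j! * g m (j)` and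
`[x, x - m] = (-1) ^ m * (x - 1)(x - 2)⋯(x - m) * g m (-x)`.
Put `F = ∑ h ≤ n, B_h / h! * z ^ h * g (n - h)`, a polynomial of degree at most `n`. Then
`B_{n+u,u} = (n + u)! / u! * F(u)` and `A_{x,x-n} = (-1) ^ n * (x - 1)⋯(x - n) * F(-x)`. Lagrange
interpolation of `F` at the nodes `0, …, n`, evaluated at `-x`, is the theorem once the Lagrange
weights are rewritten as binomial coefficients (`lagrange_weight`).

Rather than through power series, the `g m` are obtained from `g 0 = 1` and the functional equation
`(m + 1 + z) g (m + 1) (z) - z g (m + 1) (z - 1) = z g m (z)`, which contains the recurrences of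
both kinds of Stirling numbers. It is solvable because the operator on its left-hand side is
triangular with nonzero diagonal in the basis of rising factorials
(`exists_solution`, `exists_stirlingPoly`).
-/

/-- Unsigned Stirling numbers of the first kind (cycle Stirling numbers). -/
def stirling1 : ℕ → ℕ → ℕ
  | 0, 0 => 1
  | 0, _ + 1 => 0
  | _ + 1, 0 => 0
  | n + 1, k + 1 => n * stirling1 n (k + 1) + stirling1 n k

/-- Generalized binomial coefficient with integer top: `C(a,b) = a(a-1)⋯(a-b+1)/b!`. -/
def intChoose (a : ℤ) (b : ℕ) : ℚ :=
  (∏ i ∈ Finset.range b, ((a : ℚ) - i)) / b.factorial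

/-- Bernoulli–Stirling numbers of the first kind. -/
def bsA (n k : ℕ) : ℚ :=
  ∑ h ∈ Finset.range (n + 1),
    bernoulli h * intChoose ((k : ℤ) + h - 1) h * stirling1 n (h + k) * (n : ℚ) ^ h

open Polynomial Finset

/-! ### The interpolating polynomials -/

/-- The operator `p ↦ (m + 1 + z) p(z) - z p(z - 1)` maps the polynomials of degree at most `d` onto
themselves: it sends the rising factorial of degree `k` to `m + 1 + k` times itself plus a multiple
of the rising factorial of degree `k - 1`. -/
lemma exists_solution (m d : ℕ) : ∀ q : ℚ[X], q.natDegree ≤ d → ∃ p : ℚ[X], p.natDegree ≤ d ∧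
    ∀ z : ℚ, (m + 1 + z) * p.eval z - z * p.eval (z - 1) = q.eval z := by
  induction d with
  | zero =>
    intro q hq
    rw [Nat.le_zero, natDegree_eq_zero] at hq
    obtain ⟨c, rfl⟩ := hq
    refine ⟨C (c / (m + 1)), by simp, fun z => ?_⟩
    have : (m : ℚ) + 1 ≠ 0 := by positivity
    simp only [eval_C]
    field_simp
    ring
  | succ d ih =>
    intro q hq
    set c := q.coeff (d + 1) with hc
    -- The top coefficient of the solution: the diagonal entry at `d + 1` is `m + 1 + (d + 1)`.
    set e : ℚ := c / (m + d + 2) with he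
    have hec : c = e * (m + d + 2) := by
      have : (m : ℚ) + d + 2 ≠ 0 := by positivity
      rw [he]; field_simp
    have hdeg (k : ℕ) : (ascPochhammer ℚ k).natDegree = k := ascPochhammer_natDegree ℚ k
    have hlow : (q - C c * ascPochhammer ℚ (d + 1)).natDegree ≤ d := by
      rw [natDegree_le_iff_coeff_eq_zero]
      intro N hN
      rcases Nat.lt_or_ge (d + 1) N with h | h
      · rw [coeff_sub, coeff_C_mul, coeff_eq_zero_of_natDegree_lt (by omega),
          coeff_eq_zero_of_natDegree_lt (by rw [hdeg]; omega)]
        simp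
      · obtain rfl : N = d + 1 := by omega
        have h1 : (ascPochhammer ℚ (d + 1)).coeff (d + 1) = 1 := by
          have := monic_ascPochhammer ℚ (d + 1)
          rwa [Monic, leadingCoeff, hdeg] at this
        rw [coeff_sub, coeff_C_mul, h1, ← hc]; simp
    obtain ⟨p, hp, hpe⟩ := ih
      (q - C c * ascPochhammer ℚ (d + 1) + C (e * (d + 1) * d) * ascPochhammer ℚ d)
      (natDegree_add_le_of_degree_le hlow ((natDegree_C_mul_le _ _).trans (hdeg d).le))
    refine ⟨p + C e * ascPochhammer ℚ (d + 1), natDegree_add_le_of_degree_le (by omega)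
      ((natDegree_C_mul_le _ _).trans (hdeg _).le), fun z => ?_⟩
    have h1 : (ascPochhammer ℚ (d + 1)).eval z = (ascPochhammer ℚ d).eval z * (z + d) :=
      ascPochhammer_succ_eval d z
    have h2 : (ascPochhammer ℚ (d + 1)).eval (z - 1) = (z - 1) * (ascPochhammer ℚ d).eval z := by
      rw [ascPochhammer_succ_left]; simp
    have h3 := hpe z
    simp only [eval_add, eval_sub, eval_mul, eval_C, h1, h2] at h3 ⊢
    rw [hec] at h3
    linear_combination h3

/-- The polynomials `g m` are the coefficients of `t ^ m` in `((e ^ t - 1) / t) ^ z`. -/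
lemma exists_stirlingPoly : ∃ g : ℕ → ℚ[X], g 0 = 1 ∧ (∀ m, (g m).natDegree ≤ m) ∧
    ∀ (m : ℕ) (z : ℚ), (m + 1 + z) * (g (m + 1)).eval z - z * (g (m + 1)).eval (z - 1) =
      z * (g m).eval z := by
  have H (m : ℕ) (q : ℚ[X]) (hq : q.natDegree ≤ m) : ∃ p : ℚ[X], p.natDegree ≤ m + 1 ∧
      ∀ z : ℚ, (m + 1 + z) * p.eval z - z * p.eval (z - 1) = z * q.eval z := by
    obtain ⟨p, hp, h⟩ := exists_solution m (m + 1) (X * q)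
      (natDegree_mul_le.trans (by rw [natDegree_X]; omega))
    exact ⟨p, hp, fun z => by rw [h z, eval_mul, eval_X]⟩
  choose! step h1 h2 using H
  let g : ℕ → ℚ[X] := fun m => Nat.rec 1 step m
  have hg (m : ℕ) : (g m).natDegree ≤ m := by
    induction m with
    | zero => exact natDegree_one.le
    | succ m ih => exact h1 m _ ih
  exact ⟨g, rfl, hg, fun m z => h2 m _ (hg m) z⟩

/-! ### Stirling and Bernoulli–Stirling numbers as values of polynomials -/

lemma stirling1_eq_zero : ∀ {n k : ℕ}, n < k → stirling1 n k = 0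
  | 0, k + 1, _ => by simp [stirling1]
  | n + 1, k + 1, h => by
    rw [stirling1, stirling1_eq_zero (show n < k + 1 by omega),
      stirling1_eq_zero (show n < k by omega), mul_zero]

lemma stirling2_eq_zero : ∀ {n k : ℕ}, n < k → stirling2 n k = 0
  | 0, k + 1, _ => by simp [stirling2]
  | n + 1, k + 1, h => by
    rw [stirling2, stirling2_eq_zero (show n < k + 1 by omega),
      stirling2_eq_zero (show n < k by omega), mul_zero]

lemma stirling1_self (n : ℕ) : stirling1 n n = 1 := by
  induction n with
  | zero => simp [stirling1]
  | succ n ih => rw [stirling1, ih, stirling1_eq_zero (by omega), mul_zero, zero_add]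

lemma stirling2_self (n : ℕ) : stirling2 n n = 1 := by
  induction n with
  | zero => simp [stirling2]
  | succ n ih => rw [stirling2, ih, stirling2_eq_zero (by omega), mul_zero, zero_add]

lemma stirling2_eq {g : ℕ → ℚ[X]} (g0 : g 0 = 1)
    (grec : ∀ (m : ℕ) (z : ℚ), (m + 1 + z) * (g (m + 1)).eval z -
      z * (g (m + 1)).eval (z - 1) = z * (g m).eval z)
    (m j : ℕ) :
    (stirling2 (m + j) j : ℚ) * j.factorial = (m + j).factorial * (g m).eval (j : ℚ) := by
  induction m generalizing j with
  | zero => simp [g0, stirling2_self]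
  | succ m ihm =>
    induction j with
    | zero =>
      have h := grec m 0
      have hm : (m : ℚ) + 1 ≠ 0 := by positivity
      have h' : (g (m + 1)).eval 0 = 0 := by simpa [hm] using h
      simp [stirling2, h']
    | succ j ihj =>
      have h1 := ihm (j + 1)
      have h := grec m (j + 1)
      rw [show m + 1 + (j + 1) = (m + 1 + j) + 1 by ring, stirling2, Nat.factorial_succ (m + 1 + j)]
      rw [show m + (j + 1) = m + 1 + j by ring] at h1
      rw [Nat.factorial_succ] at h1 ⊢
      push_cast at *
      rw [add_sub_cancel_right] at h
      linear_combination (j + 1 : ℚ) * h1 + (j + 1 : ℚ) * ihj -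
        ((m + 1 + j).factorial : ℚ) * h

/-- Here `x = k + m`. The product over `i` is `(x - 1)(x - 2)⋯(x - m)`; for `k = 0 < m` it vanishes,
in accordance with `[m, 0] = 0`. -/
lemma stirling1_eq {g : ℕ → ℚ[X]} (g0 : g 0 = 1)
    (grec : ∀ (m : ℕ) (z : ℚ), (m + 1 + z) * (g (m + 1)).eval z -
      z * (g (m + 1)).eval (z - 1) = z * (g m).eval z)
    (m k : ℕ) :
    (stirling1 (k + m) k : ℚ) =
      (-1) ^ m * (∏ i ∈ range m, ((k + m : ℚ) - 1 - i)) * (g m).eval (-(k + m : ℚ)) := by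
  induction m generalizing k with
  | zero => simp [g0, stirling1_self]
  | succ m ihm =>
    induction k with
    | zero =>
      rw [prod_range_succ]
      simp [← add_assoc, stirling1]
    | succ k ihk =>
      have h := grec m (-(k + m + 1 : ℚ))
      have h1 := ihm (k + 1)
      rw [show k + 1 + (m + 1) = (k + (m + 1)) + 1 by ring, stirling1]
      rw [show k + 1 + m = k + (m + 1) by ring] at h1
      rw [prod_range_succ']
      rw [prod_range_succ] at ihk
      push_cast at *
      rw [h1, ihk]
      have e1 : ∏ i ∈ range m, ((k : ℚ) + 1 + m - 1 - i) = ∏ i ∈ range m, ((k : ℚ) + m - i) :=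
        prod_congr rfl fun i _ => by ring
      have e2 : ∏ i ∈ range m, ((k : ℚ) + (m + 1) - 1 - i) = ∏ i ∈ range m, ((k : ℚ) + m - i) :=
        prod_congr rfl fun i _ => by ring
      have e3 : ∏ i ∈ range m, ((k : ℚ) + 1 + (m + 1) - 1 - (i + 1)) =
          ∏ i ∈ range m, ((k : ℚ) + m - i) :=
        prod_congr rfl fun i _ => by ring
      rw [e1, e2, e3]
      rw [show -((k : ℚ) + m + 1) - 1 = -(k + 1 + (m + 1)) by ring] at h
      rw [show -((k : ℚ) + 1 + m) = -(k + m + 1) by ring,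
        show -((k : ℚ) + (m + 1)) = -(k + m + 1) by ring]
      linear_combination (-1 : ℚ) ^ m * (∏ i ∈ range m, ((k : ℚ) + m - i)) * h

lemma bsB_eq {g : ℕ → ℚ[X]} (g0 : g 0 = 1)
    (grec : ∀ (m : ℕ) (z : ℚ), (m + 1 + z) * (g (m + 1)).eval z -
      z * (g (m + 1)).eval (z - 1) = z * (g m).eval z)
    (n u : ℕ) :
    bsB (n + u) u = (n + u).factorial / u.factorial *
      ∑ h ∈ range (n + 1), _root_.bernoulli h / h.factorial * (u : ℚ) ^ h * (g (n - h)).eval (u : ℚ) := by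
  rw [bsB, show n + u + 1 = n + 1 + u by ring, sum_range_add, mul_sum]
  rw [sum_eq_zero (s := range u), add_zero]
  · refine sum_congr rfl fun h hh => ?_
    rw [mem_range] at hh
    have hs := stirling2_eq g0 grec (n - h) u
    rw [show n - h + u = n + u - h by omega] at hs
    rw [Nat.cast_choose ℚ (show h ≤ n + u by omega)]
    have f1 := Nat.cast_ne_zero (R := ℚ).2 (Nat.factorial_ne_zero h)
    have f2 := Nat.cast_ne_zero (R := ℚ).2 (Nat.factorial_ne_zero (n + u - h))
    have f3 := Nat.cast_ne_zero (R := ℚ).2 (Nat.factorial_ne_zero u)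
    field_simp
    linear_combination _root_.bernoulli h * (u : ℚ) ^ h * hs
  · intro h hh
    rw [mem_range] at hh
    rw [stirling2_eq_zero (by omega)]
    simp

lemma bsA_eq {g : ℕ → ℚ[X]} (g0 : g 0 = 1)
    (grec : ∀ (m : ℕ) (z : ℚ), (m + 1 + z) * (g (m + 1)).eval z -
      z * (g (m + 1)).eval (z - 1) = z * (g m).eval z)
    (n k : ℕ) :
    bsA (k + n) k = (-1) ^ n * (∏ i ∈ range n, ((k + n : ℚ) - 1 - i)) *
      ∑ h ∈ range (n + 1), _root_.bernoulli h / h.factorial * (-(k + n : ℚ)) ^ h *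
        (g (n - h)).eval (-(k + n : ℚ)) := by
  rw [bsA, show k + n + 1 = n + 1 + k by ring, sum_range_add, mul_sum]
  rw [sum_eq_zero (s := range k), add_zero]
  · refine sum_congr rfl fun h hh => ?_
    rw [mem_range] at hh
    obtain ⟨d, rfl⟩ : ∃ d, n = d + h := ⟨n - h, by omega⟩
    have hs := stirling1_eq g0 grec d (h + k)
    rw [show h + k + d = k + (d + h) by ring] at hs
    rw [hs, Nat.add_sub_cancel, prod_range_add, intChoose]
    push_cast
    rw [show (h : ℚ) + k + d = k + (d + h) by ring]
    have e : ∏ i ∈ range h, ((k : ℚ) + h - 1 - i) =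
        ∏ i ∈ range h, ((k : ℚ) + (d + h) - 1 - (d + i)) :=
      prod_congr rfl fun i _ => by ring
    have s : (-1 : ℚ) ^ h * (-1) ^ h = 1 := by rw [← mul_pow]; simp
    rw [e, neg_pow ((k : ℚ) + (d + h)) h, pow_add]
    linear_combination (-(_root_.bernoulli h / h.factorial) * (-1) ^ d *
      (∏ i ∈ range d, ((k : ℚ) + (d + h) - 1 - i)) *
      (∏ i ∈ range h, ((k : ℚ) + (d + h) - 1 - (d + i))) * (k + (d + h) : ℚ) ^ h *
      (g d).eval (-(k + (d + h) : ℚ))) * s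
  · intro h hh
    rw [stirling1_eq_zero (by omega)]
    simp

/-! ### Lagrange interpolation -/

/-- Lagrange interpolation at the nodes `0, …, n`. -/
lemma eval_eq_lagrange (F : ℚ[X]) (n : ℕ) (hF : F.natDegree ≤ n) (z : ℚ) :
    F.eval z = ∑ u ∈ range (n + 1),
      F.eval (u : ℚ) * ∏ v ∈ (range (n + 1)).erase u, ((z - v) / (u - v)) := by
  have h := Lagrange.eq_interpolate (f := F) (s := range (n + 1)) (v := fun i : ℕ => (i : ℚ))
    (Nat.cast_injective.injOn) (by
      rw [card_range]
      exact lt_of_le_of_lt degree_le_natDegree (by exact_mod_cast Nat.lt_succ_of_le hF))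
  conv_lhs => rw [h]
  rw [Lagrange.interpolate_apply, eval_finsetSum]
  refine sum_congr rfl fun u _ => ?_
  rw [eval_mul, eval_C, Lagrange.basis, eval_prod]
  congr 1
  refine prod_congr rfl fun v _ => ?_
  simp [Lagrange.basisDivisor, div_eq_inv_mul]

lemma prod_erase_range (f : ℕ → ℚ) (u d : ℕ) :
    ∏ v ∈ (range (u + d + 1)).erase u, f v =
      (∏ i ∈ range u, f i) * ∏ i ∈ range d, f (u + 1 + i) := by
  have : (range (u + d + 1)).erase u = range u ∪ Ico (u + 1) (u + 1 + d) := by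
    ext v; simp; omega
  rw [this, prod_union, prod_Ico_eq_prod_range, Nat.add_sub_cancel_left]
  rw [disjoint_left]
  intro v; simp; omega

lemma prod_range_sub_factorial (u : ℕ) : ∏ i ∈ range u, ((u : ℚ) - i) = u.factorial := by
  rw [← prod_range_add_one_eq_factorial, ← prod_range_reflect]
  push_cast
  refine prod_congr rfl fun i hi => ?_
  rw [mem_range] at hi
  rw [Nat.cast_sub (by omega), Nat.cast_sub (by omega)]
  push_cast; ring

/-- After multiplication by `(-1) ^ n * (x - 1)⋯(x - n)`, the Lagrange weight of the node `u` at the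
point `-x` becomes a product of two binomial coefficients times `(n + u)! / u!`, the factor that
relates `bsB (n + u) u` to the interpolated polynomial. -/
lemma lagrange_weight (n x u : ℕ) (hu : u ≤ n) :
    intChoose ((n : ℤ) + x) (n - u) * intChoose ((n : ℤ) - x) (n + u) *
        ((n + u).factorial / u.factorial) =
      (-1) ^ n * (∏ i ∈ range n, ((x : ℚ) - 1 - i)) *
        ∏ v ∈ (range (n + 1)).erase u, ((-(x : ℚ) - v) / (u - v)) := by
  obtain ⟨d, rfl⟩ : ∃ d, n = u + d := ⟨n - u, by omega⟩
  have a1 : ∏ i ∈ range d, ((-(x : ℚ) - (u + 1 + i : ℕ)) / (u - (u + 1 + i : ℕ))) =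
      (∏ i ∈ range d, (((u + d : ℕ) : ℚ) + x - i)) / d.factorial := by
    rw [← prod_range_reflect (fun i : ℕ => ((u + d : ℕ) : ℚ) + x - i),
      ← prod_range_add_one_eq_factorial, Nat.cast_prod, ← prod_div_distrib]
    refine prod_congr rfl fun i hi => ?_
    rw [mem_range] at hi
    rw [Nat.cast_sub (by omega), Nat.cast_sub (by omega)]
    push_cast
    have h1 : (i : ℚ) + 1 ≠ 0 := by positivity
    rw [show (u : ℚ) - (u + 1 + i) = -(i + 1) by ring, div_neg, ← neg_div]
    congr 1
    ring
  have a2 : ∏ i ∈ range (u + d), (((u + d : ℕ) : ℚ) - x - i) =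
      (-1) ^ (u + d) * ∏ i ∈ range (u + d), ((x : ℚ) - 1 - i) := by
    have hc : (-1 : ℚ) ^ (u + d) = ∏ _i ∈ range (u + d), (-1 : ℚ) := by
      rw [prod_const, card_range]
    rw [← prod_range_reflect, hc, ← prod_mul_distrib]
    refine prod_congr rfl fun i hi => ?_
    rw [mem_range] at hi
    rw [Nat.cast_sub (by omega), Nat.cast_sub (by omega)]
    push_cast
    ring
  have a3 : ∏ i ∈ range u, (((u + d : ℕ) : ℚ) - x - (u + d + i : ℕ)) =
      ∏ i ∈ range u, (-(x : ℚ) - i) :=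
    prod_congr rfl fun i _ => by push_cast; ring
  rw [prod_erase_range, a1, prod_div_distrib, prod_range_sub_factorial, intChoose, intChoose,
    Nat.add_sub_cancel_left]
  simp only [Int.cast_add, Int.cast_sub, Int.cast_natCast]
  rw [prod_range_add, a2, a3]
  have f := Nat.cast_ne_zero (R := ℚ).2 (Nat.factorial_ne_zero (u + d + u))
  field_simp

theorem bsA_eq_sum_bsB (n x : ℕ) (hx : n ≤ x) :
    bsA x (x - n) =
      ∑ u ∈ Finset.range (n + 1),
        intChoose ((n : ℤ) + x) (n - u) * intChoose ((n : ℤ) - x) (n + u) * bsB (n + u) u := by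
  obtain ⟨g, g0, gdeg, grec⟩ := exists_stirlingPoly
  let F : ℚ[X] := ∑ h ∈ range (n + 1), C (_root_.bernoulli h / h.factorial) * X ^ h * g (n - h)
  have hFe (z : ℚ) : F.eval z = ∑ h ∈ range (n + 1),
      _root_.bernoulli h / h.factorial * z ^ h * (g (n - h)).eval z := by
    simp [F, eval_finsetSum]
  have hF : F.natDegree ≤ n := by
    refine natDegree_sum_le_of_forall_le _ _ fun h hh => ?_
    rw [mem_range] at hh
    refine (natDegree_mul_le_of_le (natDegree_C_mul_X_pow_le _ _) (gdeg _)).trans ?_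
    omega
  obtain ⟨k, rfl⟩ : ∃ k, x = k + n := ⟨x - n, by omega⟩
  rw [Nat.add_sub_cancel, bsA_eq g0 grec, ← hFe, eval_eq_lagrange F n hF, mul_sum]
  refine sum_congr rfl fun u hu => ?_
  rw [mem_range] at hu
  have hw := lagrange_weight n (k + n) u (by omega)
  rw [bsB_eq g0 grec, ← hFe, ← mul_assoc (intChoose _ _ * intChoose _ _), hw]
  push_cast
  ring
end
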